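/- arXiv:1407.0139 — 2 statements merged into one kernel-verified Lean document; each statement's English description precedes it below -/
import Mathlib

section
/- Let G be a finite connected bridgeless simple graph, let S be a pairwise-disconnecting set of G, and for an edge e of G let S_M(e) denote the union of {e} and the set of all bridges of G − e. Then for any two edges e, f ∈ S, S_M(e) = S_M(f). -/
open LaurentPolynomial Finset

/-- `S` is a pairwise-disconnecting set of `G`: a set of at least two edges of `G` such that
deleting any two distinct edges of `S` disconnects the graph. -/
def IsPDSet {V : Type*} (G : SimpleGraph V) (S : Finset (Sym2 V)) : Prop :=
  ↑S ⊆ G.edgeSet ∧ 2 ≤ S.card ∧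
    ∀ e ∈ S, ∀ f ∈ S, e ≠ f → ¬ (G.deleteEdges {e, f}).Connected

/-- A pairwise-disconnecting set is maximal if no pairwise-disconnecting set contains it
as a proper subset. -/
def IsMaxPDSet {V : Type*} (G : SimpleGraph V) (S : Finset (Sym2 V)) : Prop :=
  IsPDSet G S ∧ ∀ S' : Finset (Sym2 V), IsPDSet G S' → S ⊆ S' → S' = S

open scoped Classical in
/-- `SMfin G e` is the union of `{e}` and the set of all bridges of `G - e`. -/
noncomputable def SMfin {V : Type*} [Fintype V] [DecidableEq V] (G : SimpleGraph V)
    (e : Sym2 V) : Finset (Sym2 V) :=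
  insert e (Finset.univ.filter fun f => (G.deleteEdges {e}).IsBridge f)

theorem pd_not_connected_iff {V : Type*} {G : SimpleGraph V} (hconn : G.Connected)
    (hbl : ∀ g : Sym2 V, ¬ G.IsBridge g) (e f : Sym2 V) :
    ¬ (G.deleteEdges {e, f}).Connected ↔ (G.deleteEdges {e}).IsBridge f := by
  have hE : (G.deleteEdges {e}).Connected := by
    induction e with
    | h x y => exact hconn.connected_delete_edge_of_not_isBridge (hbl _)
  have h2 : G.deleteEdges {e, f} = (G.deleteEdges {e}).deleteEdges {f} := by
    rw [SimpleGraph.deleteEdges_deleteEdges]; rfl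
  rw [h2]
  induction f with
  | h x y =>
    constructor
    · intro h
      by_contra hb
      exact h (hE.connected_delete_edge_of_not_isBridge hb)
    · intro hb h
      exact SimpleGraph.isBridge_iff.1 hb (h.preconnected x y)

theorem pd_symm {V : Type*} {G : SimpleGraph V} (hconn : G.Connected)
    (hbl : ∀ g : Sym2 V, ¬ G.IsBridge g) {e f : Sym2 V}
    (h : (G.deleteEdges {e}).IsBridge f) : (G.deleteEdges {f}).IsBridge e := by
  rw [← pd_not_connected_iff hconn hbl] at h ⊢
  rwa [Set.pair_comm]

theorem pd_mem_edgeSet {V : Type*} {G : SimpleGraph V} (hconn : G.Connected)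
    (hbl : ∀ g : Sym2 V, ¬ G.IsBridge g) {e f : Sym2 V}
    (h : (G.deleteEdges {e}).IsBridge f) : f ∈ G.edgeSet := by
  have hE : (G.deleteEdges {e}).Connected := by
    induction e with
    | h x y => exact hconn.connected_delete_edge_of_not_isBridge (hbl _)
  induction f with
  | h x y =>
    exact SimpleGraph.deleteEdges_le _ (h.reachable_iff_adj.1 (hE.preconnected x y))

theorem pd_cycle {V : Type*} {G : SimpleGraph V} {e f : Sym2 V}
    (h : (G.deleteEdges {e}).IsBridge f) {u : V} (p : G.Walk u u) (hp : p.IsCycle)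
    (hf : f ∈ p.edges) : e ∈ p.edges := by
  by_contra he
  have hq : ∀ g ∈ p.edges, g ∈ (G.deleteEdges {e}).edgeSet := by
    intro g hg
    rw [SimpleGraph.edgeSet_deleteEdges]
    exact ⟨p.edges_subset_edgeSet hg, fun h' => he (h' ▸ hg)⟩
  refine h.notMem_edges_of_isCycle (hp.transfer hq) ?_
  rwa [SimpleGraph.Walk.edges_transfer]

theorem pd_trans {V : Type*} {G : SimpleGraph V} (hconn : G.Connected)
    (hbl : ∀ g : Sym2 V, ¬ G.IsBridge g) {e f g : Sym2 V}
    (h1 : (G.deleteEdges {e}).IsBridge f) (h2 : (G.deleteEdges {f}).IsBridge g)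
    (hne : g ≠ e) : (G.deleteEdges {e}).IsBridge g := by
  have hg := pd_mem_edgeSet hconn hbl h2
  have hg' : g ∈ (G.deleteEdges {e}).edgeSet := by
    rw [SimpleGraph.edgeSet_deleteEdges]
    exact ⟨hg, hne⟩
  rw [SimpleGraph.isBridge_iff_forall_cycle_notMem hg']
  intro u p hp hgp
  have hq : ∀ a ∈ p.edges, a ∈ G.edgeSet := fun a ha =>
    SimpleGraph.edgeSet_mono (SimpleGraph.deleteEdges_le _) (p.edges_subset_edgeSet ha)
  have hc := hp.transfer hq
  have h3 := pd_cycle h1 _ hc (pd_cycle h2 _ hc (by rwa [SimpleGraph.Walk.edges_transfer]))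
  rw [SimpleGraph.Walk.edges_transfer] at h3
  have h4 := p.edges_subset_edgeSet h3
  rw [SimpleGraph.edgeSet_deleteEdges] at h4
  exact h4.2 rfl

theorem pd_subset {V : Type*} [Fintype V] [DecidableEq V] {G : SimpleGraph V}
    (hconn : G.Connected) (hbl : ∀ g : Sym2 V, ¬ G.IsBridge g) {e f : Sym2 V}
    (h : (G.deleteEdges {e}).IsBridge f) : SMfin G e ⊆ SMfin G f := by
  intro g hg
  simp only [SMfin, Finset.mem_insert, Finset.mem_filter, Finset.mem_univ, true_and] at hg ⊢
  have hs := pd_symm hconn hbl h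
  by_cases hgf : g = f
  · exact Or.inl hgf
  · right
    rcases hg with rfl | hg
    · exact hs
    · exact pd_trans hconn hbl hs hg hgf

/-- For any two edges `e, f` of a pairwise-disconnecting set `S` of a finite connected
bridgeless simple graph `G`, `S_M(e) = S_M(f)`, where `S_M(e)` is the union of `{e}` and
the set of bridges of `G - e`. -/
theorem SMfin_eq_of_mem_pdset {V : Type*} [Fintype V] [DecidableEq V]
    (G : SimpleGraph V) (hconn : G.Connected) (hbl : ∀ g : Sym2 V, ¬ G.IsBridge g)
    (S : Finset (Sym2 V)) (hS : IsPDSet G S) (e f : Sym2 V) (he : e ∈ S) (hf : f ∈ S) :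
    SMfin G e = SMfin G f := by
  by_cases hef : e = f
  · rw [hef]
  · have h := (pd_not_connected_iff hconn hbl e f).1 (hS.2.2 e he f hf hef)
    exact Finset.Subset.antisymm (pd_subset hconn hbl h)
      (pd_subset hconn hbl (pd_symm hconn hbl h))
end

section
/- Let G be a finite connected bridgeless simple graph and let e be an edge of G. Then there exists a pairwise-disconnecting set of G containing e if and only if the graph G − e obtained by deleting e has a bridge. Moreover, in that case G has a unique maximal pairwise-disconnecting set containing e, namely the union of {e} and the set of all bridges of G − e. -/
open LaurentPolynomial Finset

section Helpers
open SimpleGraph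

theorem pd_bridge_iff {V : Type*} {G : SimpleGraph V} (hconn : G.Connected)
    (hbl : ∀ g : Sym2 V, ¬ G.IsBridge g) (e f : Sym2 V) :
    (G.deleteEdges {e}).IsBridge f ↔ ¬ (G.deleteEdges {e, f}).Connected := by
  have hc : (G.deleteEdges {e}).Connected := by
    induction e with
    | h x y => exact hconn.connected_delete_edge_of_not_isBridge (hbl _)
  have h2 : G.deleteEdges {e, f} = (G.deleteEdges {e}).deleteEdges {f} := by
    rw [deleteEdges_deleteEdges]; rfl
  rw [h2]
  induction f with
  | h x y =>
    constructor
    · intro h hc'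
      exact h (hc'.preconnected x y)
    · intro h
      by_contra h'
      exact h (hc.connected_delete_edge_of_not_isBridge h')

theorem pd_bridge_mem {V : Type*} {G : SimpleGraph V} (hconn : G.Connected)
    (hbl : ∀ g : Sym2 V, ¬ G.IsBridge g) {e f : Sym2 V}
    (h : (G.deleteEdges {e}).IsBridge f) : f ∈ G.edgeSet ∧ f ≠ e := by
  have hc : (G.deleteEdges {e}).Connected := by
    induction e with
    | h x y => exact hconn.connected_delete_edge_of_not_isBridge (hbl _)
  constructor
  · induction f with
    | h x y =>
      have := (h.reachable_iff_adj).1 (hc.preconnected x y)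
      exact deleteEdges_le _ this
  · rintro rfl
    exact hbl _ (isBridge_deleteEdges_singleton.1 h)

theorem pd_bridge_cycle {V : Type*} {G : SimpleGraph V} {e f : Sym2 V}
    (hf : f ∈ G.edgeSet) (hne : f ≠ e) :
    (G.deleteEdges {e}).IsBridge f ↔
      ∀ ⦃u : V⦄ (p : G.Walk u u), p.IsCycle → f ∈ p.edges → e ∈ p.edges := by
  have hf' : f ∈ (G.deleteEdges {e}).edgeSet := by
    rw [edgeSet_deleteEdges]; exact ⟨hf, hne⟩
  rw [isBridge_iff_forall_cycle_notMem hf']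
  constructor
  · intro h u p hp hfp
    by_contra hep
    have hq : ∀ e' ∈ p.edges, e' ∉ ({e} : Set (Sym2 V)) := by
      rintro e' he' rfl; exact hep he'
    refine h (p.toDeleteEdges {e} hq) (hp.toDeleteEdges G {e} hq) ?_
    simpa [Walk.toDeleteEdges] using hfp
  · intro h u p hp hfp
    have h1 := h (p.mapLe (deleteEdges_le _)) ((Walk.isCycle_mapLe _).2 hp) (by simpa using hfp)
    have h2 : e ∈ p.edges := by simpa using h1
    have h3 := p.edges_subset_edgeSet h2
    rw [edgeSet_deleteEdges] at h3
    exact h3.2 rfl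

theorem pd_bridge_trans {V : Type*} {G : SimpleGraph V} (hconn : G.Connected)
    (hbl : ∀ g : Sym2 V, ¬ G.IsBridge g) {e f g : Sym2 V} (he : e ∈ G.edgeSet)
    (hf : (G.deleteEdges {e}).IsBridge f) (hg : (G.deleteEdges {e}).IsBridge g) (hne : f ≠ g) :
    (G.deleteEdges {f}).IsBridge g := by
  obtain ⟨hfm, hfe⟩ := pd_bridge_mem hconn hbl hf
  obtain ⟨hgm, hge⟩ := pd_bridge_mem hconn hbl hg
  have hf' : (G.deleteEdges {f}).IsBridge e := by
    rw [pd_bridge_iff hconn hbl, Set.pair_comm, ← pd_bridge_iff hconn hbl]; exact hf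
  rw [pd_bridge_cycle hgm hge] at hg
  rw [pd_bridge_cycle he hfe.symm] at hf'
  rw [pd_bridge_cycle hgm hne.symm]
  exact fun u p hp h => hf' p hp (hg p hp h)

theorem mem_SMfin {V : Type*} [Fintype V] [DecidableEq V] {G : SimpleGraph V} {e f : Sym2 V} :
    f ∈ SMfin G e ↔ f = e ∨ (G.deleteEdges {e}).IsBridge f := by
  simp [SMfin]

end Helpers

/-- For an edge `e` of a finite connected bridgeless simple graph `G`, there is a
pairwise-disconnecting set containing `e` iff `G - e` has a bridge; in that case the unique
maximal pairwise-disconnecting set containing `e` is `{e}` together with all bridges of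
`G - e`. -/
theorem exists_pdset_iff_bridge {V : Type*} [Fintype V] [DecidableEq V]
    (G : SimpleGraph V) (hconn : G.Connected) (hbl : ∀ g : Sym2 V, ¬ G.IsBridge g)
    (e : Sym2 V) (he : e ∈ G.edgeSet) :
    ((∃ S : Finset (Sym2 V), IsPDSet G S ∧ e ∈ S) ↔
        ∃ f : Sym2 V, (G.deleteEdges {e}).IsBridge f) ∧
      ((∃ f : Sym2 V, (G.deleteEdges {e}).IsBridge f) →
        (IsMaxPDSet G (SMfin G e) ∧ e ∈ SMfin G e ∧
          ∀ S : Finset (Sym2 V), IsMaxPDSet G S → e ∈ S → S = SMfin G e)) := by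
  have key : ∀ S : Finset (Sym2 V), IsPDSet G S → e ∈ S → S ⊆ SMfin G e := by
    intro S hS heS x hx
    rw [mem_SMfin]
    by_cases hxe : x = e
    · exact Or.inl hxe
    · exact Or.inr ((pd_bridge_iff hconn hbl e x).2 (hS.2.2 e heS x hx (Ne.symm hxe)))
  have heM : e ∈ SMfin G e := mem_SMfin.2 (Or.inl rfl)
  have hPD : (∃ f : Sym2 V, (G.deleteEdges {e}).IsBridge f) → IsPDSet G (SMfin G e) := by
    rintro ⟨f, hf⟩
    refine ⟨?_, ?_, ?_⟩
    · intro x hx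
      rcases mem_SMfin.1 (Finset.mem_coe.1 hx) with rfl | h
      · exact he
      · exact (pd_bridge_mem hconn hbl h).1
    · have : 1 < (SMfin G e).card := Finset.one_lt_card.2
        ⟨f, mem_SMfin.2 (Or.inr hf), e, heM, (pd_bridge_mem hconn hbl hf).2⟩
      exact this
    · intro a ha b hb hab
      rw [← pd_bridge_iff hconn hbl]
      rcases mem_SMfin.1 ha with rfl | ha
      · rcases mem_SMfin.1 hb with rfl | hb
        · exact absurd rfl hab
        · exact hb
      · rcases mem_SMfin.1 hb with rfl | hb
        · rw [pd_bridge_iff hconn hbl, Set.pair_comm, ← pd_bridge_iff hconn hbl]; exact ha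
        · exact pd_bridge_trans hconn hbl he ha hb hab
  refine ⟨⟨?_, fun h => ⟨_, hPD h, heM⟩⟩, fun h => ⟨⟨hPD h, ?_⟩, heM, ?_⟩⟩
  · rintro ⟨S, hS, heS⟩
    obtain ⟨f, hfS, hfe⟩ := Finset.exists_mem_ne (show 1 < S.card from hS.2.1) e
    exact ⟨f, (pd_bridge_iff hconn hbl e f).2 (hS.2.2 e heS f hfS (Ne.symm hfe))⟩
  · intro S' hS' hsub
    exact Finset.Subset.antisymm (key S' hS' (hsub heM)) hsub
  · intro S hS heS
    exact (hS.2 _ (hPD h) (key S hS.1 heS)).symm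
end
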